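/- arXiv:2307.03059 — 6 statements merged into one kernel-verified Lean document; each statement's English description precedes it below -/
import Mathlib

section
/- (Correctness of the designator) For any structure-context T{*} with one hole and any structure Ξ, the structure (desi(T{*}), Ξ) is structurally equivalent to T{Ξ}, i.e. (desi(T{*}), Ξ) ∼ T{Ξ}. -/
set_option autoImplicit false

namespace NACLL

/-- Structures: binary trees whose leaves are formulas, with an empty structure.
`(∅,Γ)` and `(Γ,∅)` are identified with `Γ` via the smart constructor `comma`. -/
inductive Struct (F : Type) : Type where
  | emp : Struct F
  | leaf : F → Struct F
  | pair : Struct F → Struct F → Struct F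

namespace Struct

/-- Pairing of structures, erasing empty substructures. -/
def comma {F : Type} : Struct F → Struct F → Struct F
  | .emp, Δ => Δ
  | Γ, .emp => Γ
  | Γ, Δ => .pair Γ Δ

def map {F G : Type} (f : F → G) : Struct F → Struct G
  | .emp => .emp
  | .leaf a => .leaf (f a)
  | .pair l r => .pair (map f l) (map f r)

/-- Number of formula leaves of a structure. -/
def nleaves {F : Type} : Struct F → ℕ
  | .emp => 0
  | .leaf _ => 1
  | .pair l r => nleaves l + nleaves r

/-- All formula leaves of a structure satisfy a predicate. -/
def Forall {F : Type} (p : F → Prop) : Struct F → Prop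
  | .emp => True
  | .leaf a => p a
  | .pair l r => Forall p l ∧ Forall p r

end Struct

/-- Structural equivalence: the reflexive, symmetric, transitive closure of
top-level exchange and top-level associativity. -/
inductive StEquiv {F : Type} : Struct F → Struct F → Prop where
  | refl (Γ : Struct F) : StEquiv Γ Γ
  | symm {Γ Δ : Struct F} : StEquiv Γ Δ → StEquiv Δ Γ
  | trans {Γ Δ Θ : Struct F} : StEquiv Γ Δ → StEquiv Δ Θ → StEquiv Γ Θ
  | exch (Γ Δ : Struct F) : StEquiv (Γ.comma Δ) (Δ.comma Γ)
  | assoc (Γ Δ Θ : Struct F) : StEquiv (Γ.comma (Δ.comma Θ)) ((Γ.comma Δ).comma Θ)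

/-- Contexts with one hole. -/
inductive Ctx (F : Type) : Type where
  | hole : Ctx F
  | pairL : Ctx F → Struct F → Ctx F
  | pairR : Struct F → Ctx F → Ctx F

namespace Ctx

/-- Filling the hole of a context with a structure (empty substructures are erased). -/
def fill {F : Type} : Ctx F → Struct F → Struct F
  | .hole, Ξ => Ξ
  | .pairL R Δ, Ξ => (fill R Ξ).comma Δ
  | .pairR Γ R, Ξ => Γ.comma (fill R Ξ)

/-- A context viewed as a structure over `Option F`, the hole being the leaf `none`. -/
def toStruct {F : Type} : Ctx F → Struct (Option F)
  | .hole => .leaf none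
  | .pairL R Δ => (toStruct R).comma (Δ.map some)
  | .pairR Γ R => (Γ.map some).comma (toStruct R)

def size {F : Type} : Ctx F → ℕ
  | .hole => 0
  | .pairL R _ => size R + 2
  | .pairR _ R => size R + 1

/-- The designator. -/
def desi {F : Type} : Ctx F → Struct F
  | .hole => .emp
  | .pairL R Δ => desi (.pairR Δ R)
  | .pairR Γ .hole => Γ
  | .pairR Γ (.pairR Δ P) => desi (.pairR (Γ.comma Δ) P)
  | .pairR Γ (.pairL D Θp) => desi (.pairR (Θp.comma Γ) D)
termination_by c => size c
decreasing_by all_goals simp [size]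

/-- All formula leaves of a context (other than the hole) satisfy a predicate. -/
def Forall {F : Type} (p : F → Prop) : Ctx F → Prop
  | .hole => True
  | .pairL R Δ => Forall p R ∧ Δ.Forall p
  | .pairR Γ R => Γ.Forall p ∧ Forall p R

end Ctx

/-- Structural equivalence of one-hole contexts, treating the hole as a leaf. -/
def CtxEquiv {F : Type} (T X : Ctx F) : Prop := StEquiv T.toStruct X.toStruct

/-- Contexts with two holes (the first hole is the designated one). -/
inductive Ctx2 (F : Type) : Type where
  | splitLR : Ctx F → Ctx F → Ctx2 F
  | splitRL : Ctx F → Ctx F → Ctx2 F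
  | pairL : Ctx2 F → Struct F → Ctx2 F
  | pairR : Struct F → Ctx2 F → Ctx2 F

namespace Ctx2

/-- Filling the first hole of a two-hole context, yielding a one-hole context. -/
def fillFst {F : Type} : Ctx2 F → Struct F → Ctx F
  | .splitLR c1 c2, Δ => .pairR (c1.fill Δ) c2
  | .splitRL c2 c1, Δ => .pairL c2 (c1.fill Δ)
  | .pairL R Γ, Δ => .pairL (fillFst R Δ) Γ
  | .pairR Γ R, Δ => .pairR Γ (fillFst R Δ)

end Ctx2

end NACLL

namespace NACLL

/-- **Correctness of the designator.**  For any one-hole context `T{*}` and any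
structure `Ξ`, the structure `(desi T{*}, Ξ)` is structurally equivalent to `T{Ξ}`. -/
theorem designator_correct {F : Type} (T : Ctx F) (Ξ : Struct F) :
    StEquiv (T.desi.comma Ξ) (T.fill Ξ) := by
  induction T using Ctx.desi.induct with
  | case1 =>
    rw [Ctx.desi]
    exact .refl _
  | case2 R Δ ih =>
    rw [Ctx.desi]
    exact ih.trans (.exch _ _)
  | case3 Γ =>
    rw [Ctx.desi]
    exact .refl _
  | case4 Γ Δ P ih =>
    rw [Ctx.desi]
    exact ih.trans (.symm (.assoc _ _ _))
  | case5 Γ D Θp ih =>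
    rw [Ctx.desi]
    exact ih.trans (.trans (.symm (.assoc _ _ _)) (.trans (.exch _ _) (.symm (.assoc _ _ _))))

end NACLL
end

section
/- (Designator invariance) If two one-hole contexts are structurally equivalent as trees with a distinguished hole, T{*} ∼ X{*}, then their designators are syntactically equal: desi(T{*}) ≡ desi(X{*}). -/
set_option autoImplicit false

namespace NACLL

namespace Aux

variable {F : Type}

/-- Does the structure contain a hole? -/
def hasHole : Struct (Option F) → Bool
  | .emp => false
  | .leaf none => true
  | .leaf (some _) => false
  | .pair l r => hasHole l || hasHole r

/-- Designator with accumulator, on arbitrary structures with holes. -/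
def go : Struct (Option F) → Struct (Option F) → Option (Struct (Option F))
  | _, .emp => none
  | acc, .leaf none => some acc
  | _, .leaf (some _) => none
  | acc, .pair l r =>
    if hasHole l then (if hasHole r then none else go (r.comma acc) l)
    else go (acc.comma l) r

theorem emp_comma {G : Type} (s : Struct G) : Struct.emp.comma s = s := by
  cases s <;> rfl

theorem comma_emp {G : Type} (s : Struct G) : s.comma .emp = s := by
  cases s <;> rfl

theorem comma_cases {G : Type} (l r : Struct G) :
    l = .emp ∨ r = .emp ∨ l.comma r = .pair l r := by
  cases l <;> cases r <;> simp [Struct.comma]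

theorem hasHole_comma (l r : Struct (Option F)) :
    hasHole (l.comma r) = (hasHole l || hasHole r) := by
  rcases comma_cases l r with h | h | h
  · subst h; simp [emp_comma, hasHole]
  · subst h; simp [comma_emp, hasHole]
  · rw [h]; rfl

theorem go_none (s : Struct (Option F)) :
    ∀ acc, hasHole s = false → go acc s = none := by
  induction s with
  | emp => intro acc _; simp [go]
  | leaf a => cases a <;> simp [go, hasHole]
  | pair l r ihl ihr =>
    intro acc h
    simp only [hasHole, Bool.or_eq_false_iff] at h
    simp [go, h.1, ihr _ h.2]

theorem go_comma (acc l r : Struct (Option F)) :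
    go acc (l.comma r) =
      if hasHole l then (if hasHole r then none else go (r.comma acc) l)
      else go (acc.comma l) r := by
  rcases comma_cases l r with h | h | h
  · subst h; simp [emp_comma, comma_emp, hasHole]
  · subst h
    by_cases hl : hasHole l
    · simp [emp_comma, comma_emp, hasHole, hl]
    · simp only [Bool.not_eq_true] at hl
      simp [comma_emp, hl, go_none, go]
  · rw [h]; simp [go]

theorem go_equiv {S T : Struct (Option F)} (h : StEquiv S T) :
    go .emp S = go .emp T := by
  induction h with
  | refl => rfl
  | symm _ ih => exact ih.symm
  | trans _ _ ih1 ih2 => exact ih1.trans ih2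
  | exch Γ Δ =>
    cases h1 : hasHole Γ <;> cases h2 : hasHole Δ <;>
      simp [go_comma, h1, h2, emp_comma, comma_emp, go_none]
  | assoc Γ Δ Θ =>
    cases h1 : hasHole Γ <;> cases h2 : hasHole Δ <;> cases h3 : hasHole Θ <;>
      simp [go_comma, hasHole_comma, h1, h2, h3, emp_comma, comma_emp, go_none]

theorem map_comma {G H : Type} (f : G → H) (l r : Struct G) :
    (l.comma r).map f = (l.map f).comma (r.map f) := by
  cases l <;> cases r <;> rfl

theorem hasHole_map (s : Struct F) : hasHole (s.map some) = false := by
  induction s with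
  | emp => rfl
  | leaf a => rfl
  | pair l r ihl ihr => simp [Struct.map, hasHole, ihl, ihr]

theorem hasHole_toStruct (T : Ctx F) : hasHole T.toStruct = true := by
  induction T with
  | hole => rfl
  | pairL R D ih => simp [Ctx.toStruct, hasHole_comma, ih]
  | pairR D R ih => simp [Ctx.toStruct, hasHole_comma, ih]

theorem go_toStruct (T : Ctx F) : ∀ Γ : Struct F,
    go (Γ.map some) T.toStruct = some ((Ctx.desi (.pairR Γ T)).map some) := by
  induction T with
  | hole => intro Γ; simp [Ctx.toStruct, go, Ctx.desi]
  | pairL R D ih =>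
    intro Γ
    rw [Ctx.desi, ← ih, map_comma]
    simp [Ctx.toStruct, go_comma, hasHole_toStruct, hasHole_map]
  | pairR D R ih =>
    intro Γ
    rw [Ctx.desi, ← ih, map_comma]
    simp [Ctx.toStruct, go_comma, hasHole_map]

theorem desi_emp (T : Ctx F) : Ctx.desi (.pairR .emp T) = T.desi := by
  cases T with
  | hole => simp [Ctx.desi]
  | pairL R D => rw [Ctx.desi, Ctx.desi, comma_emp]
  | pairR D R => rw [Ctx.desi, emp_comma]

theorem map_inj {G H : Type} (f : G → H) (hf : Function.Injective f) (s : Struct G) :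
    ∀ t : Struct G, s.map f = t.map f → s = t := by
  induction s with
  | emp => intro t; cases t <;> simp [Struct.map]
  | leaf a =>
    intro t; cases t <;> simp [Struct.map]
    exact fun h => hf h
  | pair l r ihl ihr =>
    intro t; cases t <;> simp [Struct.map]
    exact fun h1 h2 => ⟨ihl _ h1, ihr _ h2⟩

end Aux

/-- **Designator invariance.**  If two one-hole contexts are structurally
equivalent as trees with a distinguished hole, then their designators are
syntactically equal. -/
theorem designator_invariant {F : Type} (T X : Ctx F) (h : CtxEquiv T X) :
    T.desi = X.desi := by
  have e := Aux.go_equiv h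
  have h1 := Aux.go_toStruct T .emp
  have h2 := Aux.go_toStruct X .emp
  simp only [Struct.map, Aux.desi_emp] at h1 h2
  rw [h1, h2] at e
  exact Aux.map_inj some (Option.some_injective F) _ _ (Option.some.inj e)

end NACLL
end

section
/- (Uniqueness) If (Γ,Π) ∼ (Δ,Π) where both sides contain a distinguished occurrence of the substructure Π in rightmost top-level position, then Γ ≡ Δ (syntactic equality), and hence (Γ,Π) ≡ (Δ,Π). -/
set_option autoImplicit false

namespace NACLL

/-- All pairs (leaf, surrounding structure) obtained by rerooting a tree at a leaf. -/
def reroot {G : Type} : Struct G → Struct G → Set (G × Struct G)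
  | .emp, _ => ∅
  | .leaf x, acc => {(x, acc)}
  | .pair l r, acc => reroot r (acc.comma l) ∪ reroot l (r.comma acc)

theorem comma_emp {G : Type} (a : Struct G) : a.comma .emp = a := by
  cases a <;> rfl

theorem emp_comma {G : Type} (a : Struct G) : Struct.comma .emp a = a := by
  cases a <;> rfl

theorem reroot_comma {G : Type} (l r acc : Struct G) :
    reroot (l.comma r) acc = reroot r (acc.comma l) ∪ reroot l (r.comma acc) := by
  by_cases hl : l = .emp
  · subst hl; simp [comma_emp, emp_comma, reroot]
  by_cases hr : r = .emp
  · subst hr; simp [comma_emp, emp_comma, reroot]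
  have e : l.comma r = .pair l r := by
    cases l <;> cases r <;> first | rfl | exact absurd rfl hl | exact absurd rfl hr
  rw [e, reroot]

theorem reroot_equiv {G : Type} {S T : Struct G} (h : StEquiv S T) :
    reroot S .emp = reroot T .emp := by
  induction h with
  | refl => rfl
  | symm _ ih => exact ih.symm
  | trans _ _ ih1 ih2 => exact ih1.trans ih2
  | exch a b =>
    simp only [reroot_comma, comma_emp, emp_comma]
    exact Set.union_comm _ _
  | assoc a b c =>
    simp only [reroot_comma, comma_emp, emp_comma]
    exact Set.union_assoc _ _ _

theorem reroot_map_some {F : Type} (Δ : Struct F) (acc X : Struct (Option F)) :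
    (none, X) ∉ reroot (Δ.map some) acc := by
  induction Δ generalizing acc with
  | emp => simp [Struct.map, reroot]
  | leaf a => simp [Struct.map, reroot]
  | pair l r ihl ihr => simp [Struct.map, reroot, ihl, ihr]

theorem map_some_inj {F : Type} (Γ Δ : Struct F) (h : Γ.map some = Δ.map some) : Γ = Δ := by
  induction Γ generalizing Δ with
  | emp => cases Δ <;> simp_all [Struct.map]
  | leaf a => cases Δ <;> simp_all [Struct.map]
  | pair l r ihl ihr =>
    cases Δ with
    | emp => simp [Struct.map] at h
    | leaf a => simp [Struct.map] at h
    | pair l' r' =>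
      simp only [Struct.map, Struct.pair.injEq] at h
      rw [ihl _ h.1, ihr _ h.2]

/-- **Uniqueness.**  If `(Γ,Π) ∼ (Δ,Π)` with both sides containing a
distinguished occurrence of `Π` in rightmost top-level position (an equivalence
of the contexts `(Γ,*)` and `(Δ,*)`), then `Γ ≡ Δ`, and hence `(Γ,Π) ≡ (Δ,Π)`. -/
theorem uniqueness {F : Type} (Γ Δ Θp : Struct F)
    (h : CtxEquiv (Ctx.pairR Γ .hole) (Ctx.pairR Δ .hole)) :
    Γ = Δ ∧ Γ.comma Θp = Δ.comma Θp := by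
  have key : Γ = Δ := by
    have e := reroot_equiv h
    simp only [Ctx.toStruct, reroot_comma, comma_emp, emp_comma] at e
    have m : ((none, Γ.map some) : Option F × Struct (Option F)) ∈
        reroot (Struct.leaf none) (Γ.map some) ∪ reroot (Γ.map some) (Struct.leaf none) :=
      Or.inl rfl
    rw [e] at m
    rcases m with m | m
    · exact map_some_inj _ _ (Prod.mk.inj m).2
    · exact absurd m (reroot_map_some _ _ _)
  exact ⟨key, by rw [key]⟩

end NACLL
end

section
/- (Independent substructure preservation) If Δ is a substructure of the one-hole context R{Δ}{*} that does not contain the hole *, then Δ occurs as a substructure of the designator desi(R{Δ}{*}); moreover, replacing that occurrence of Δ by a structure Π inside desi(R{Δ}{*}) yields exactly desi(R{Π}{*}). -/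
set_option autoImplicit false

namespace NACLL

theorem desi_fill_aux {F : Type} (c2 : Ctx F) : ∀ c1 : Ctx F,
    ∃ S : Ctx F, ∀ Δ, (Ctx.pairR (c1.fill Δ) c2).desi = S.fill Δ := by
  induction c2 with
  | hole => intro c1; exact ⟨c1, fun Δ => by rw [Ctx.desi]⟩
  | pairL D P ih =>
    intro c1
    obtain ⟨S, hS⟩ := ih (.pairR P c1)
    exact ⟨S, fun Δ => by rw [Ctx.desi, ← hS Δ, Ctx.fill]⟩
  | pairR G P ih =>
    intro c1
    obtain ⟨S, hS⟩ := ih (.pairL c1 G)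
    exact ⟨S, fun Δ => by rw [Ctx.desi, ← hS Δ, Ctx.fill]⟩

theorem desi_fillFst_aux {F : Type} (R : Ctx2 F) : ∀ Γ : Struct F,
    ∃ S : Ctx F, ∀ Δ, (Ctx.pairR Γ (R.fillFst Δ)).desi = S.fill Δ := by
  induction R with
  | splitLR c1 c2 =>
    intro Γ
    obtain ⟨S, hS⟩ := desi_fill_aux c2 (.pairR Γ c1)
    exact ⟨S, fun Δ => by rw [Ctx2.fillFst, Ctx.desi, ← hS Δ, Ctx.fill]⟩
  | splitRL c2 c1 =>
    intro Γ
    obtain ⟨S, hS⟩ := desi_fill_aux c2 (.pairL c1 Γ)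
    exact ⟨S, fun Δ => by rw [Ctx2.fillFst, Ctx.desi, ← hS Δ, Ctx.fill]⟩
  | pairL R G ih =>
    intro Γ
    obtain ⟨S, hS⟩ := ih (G.comma Γ)
    exact ⟨S, fun Δ => by rw [Ctx2.fillFst, Ctx.desi, ← hS Δ]⟩
  | pairR G R ih =>
    intro Γ
    obtain ⟨S, hS⟩ := ih (Γ.comma G)
    exact ⟨S, fun Δ => by rw [Ctx2.fillFst, Ctx.desi, ← hS Δ]⟩

/-- **Independent substructure preservation.**  If `Δ` is a substructure of the
one-hole context `R{Δ}{*}` not containing the hole, then `Δ` occurs as a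
substructure of the designator `desi (R{Δ}{*})`, and replacing that occurrence
of `Δ` by `Π` inside `desi (R{Δ}{*})` yields exactly `desi (R{Π}{*})`:
there is a one-hole context `S` with `desi (R{Δ}{*}) = S{Δ}` and
`desi (R{Π}{*}) = S{Π}`. -/
theorem independent_substructure_preservation {F : Type} (R : Ctx2 F) (Δ Θp : Struct F) :
    ∃ S : Ctx F, (R.fillFst Δ).desi = S.fill Δ ∧ (R.fillFst Θp).desi = S.fill Θp := by
  suffices h : ∃ S : Ctx F, ∀ Δ, (R.fillFst Δ).desi = S.fill Δ by
    obtain ⟨S, hS⟩ := h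
    exact ⟨S, hS Δ, hS Θp⟩
  cases R with
  | splitLR c1 c2 => exact desi_fill_aux c2 c1
  | splitRL c2 c1 =>
    obtain ⟨S, hS⟩ := desi_fill_aux c2 c1
    exact ⟨S, fun Δ => by rw [Ctx2.fillFst, Ctx.desi, ← hS Δ]⟩
  | pairL R G =>
    obtain ⟨S, hS⟩ := desi_fillFst_aux R G
    exact ⟨S, fun Δ => by rw [Ctx2.fillFst, Ctx.desi, ← hS Δ]⟩
  | pairR G R => exact desi_fillFst_aux R G

end NACLL
end

section
/- The sequent ⊢ (B⊥⊗A, A⊥⅋B) (the translation of the acLL sequent A→B ⊢ A→B) is provable in the classical system CNL, and every proof of it uses the top-level exchange rule E. -/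
set_option autoImplicit false

namespace CNL

/-- Formulas of classical non-associative non-commutative linear logic. -/
inductive Form : Type where
  | pos : ℕ → Form
  | neg : ℕ → Form
  | tensor : Form → Form → Form
  | par : Form → Form → Form
  | one : Form
  | bot : Form
  | oplus : Form → Form → Form
  | with' : Form → Form → Form
  | zero : Form
  | top : Form

/-- Structures: binary trees of formulas, with an empty structure;
`(∅,Γ)` and `(Γ,∅)` are identified with `Γ` via the smart constructor `comma`. -/
inductive Struct : Type where
  | emp : Struct
  | leaf : Form → Struct
  | pair : Struct → Struct → Struct

/-- Pairing of structures, erasing empty substructures. -/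
def Struct.comma : Struct → Struct → Struct
  | .emp, Δ => Δ
  | Γ, .emp => Γ
  | Γ, Δ => .pair Γ Δ

/-- Contexts with one hole. -/
inductive Ctx : Type where
  | hole : Ctx
  | pairL : Ctx → Struct → Ctx
  | pairR : Struct → Ctx → Ctx

/-- Filling the hole of a context with a structure. -/
def Ctx.fill : Ctx → Struct → Struct
  | .hole, Ξ => Ξ
  | .pairL R Δ, Ξ => (fill R Ξ).comma Δ
  | .pairR Γ R, Ξ => Γ.comma (fill R Ξ)

/-- Derivability in CNL.  The first Boolean flag indicates whether the
top-level exchange rule `E` may be used, the second whether the top-level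
associativity rules `A1` and `A2` may be used; `CNLDer true true` is full CNL. -/
inductive CNLDer : Bool → Bool → Struct → Prop where
  | initP {e a : Bool} (n : ℕ) :
      CNLDer e a (.pair (.leaf (.pos n)) (.leaf (.neg n)))
  | initN {e a : Bool} (n : ℕ) :
      CNLDer e a (.pair (.leaf (.neg n)) (.leaf (.pos n)))
  | tensor {e a : Bool} {Γ Δ : Struct} {F G : Form} :
      CNLDer e a (Γ.comma (.leaf G)) → CNLDer e a (Δ.comma (.leaf F)) →
      CNLDer e a ((Γ.comma Δ).comma (.leaf (.tensor F G)))
  | par {e a : Bool} (R : Ctx) {F G : Form} :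
      CNLDer e a (R.fill (.pair (.leaf F) (.leaf G))) →
      CNLDer e a (R.fill (.leaf (.par F G)))
  | oplus₁ {e a : Bool} (R : Ctx) {F1 F2 : Form} :
      CNLDer e a (R.fill (.leaf F1)) → CNLDer e a (R.fill (.leaf (.oplus F1 F2)))
  | oplus₂ {e a : Bool} (R : Ctx) {F1 F2 : Form} :
      CNLDer e a (R.fill (.leaf F2)) → CNLDer e a (R.fill (.leaf (.oplus F1 F2)))
  | with' {e a : Bool} (R : Ctx) {F1 F2 : Form} :
      CNLDer e a (R.fill (.leaf F1)) → CNLDer e a (R.fill (.leaf F2)) →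
      CNLDer e a (R.fill (.leaf (.with' F1 F2)))
  | bot {e a : Bool} (R : Ctx) :
      CNLDer e a (R.fill .emp) → CNLDer e a (R.fill (.leaf .bot))
  | one {e a : Bool} : CNLDer e a (.leaf .one)
  | top {e a : Bool} (R : Ctx) : CNLDer e a (R.fill (.leaf .top))
  | exch {a : Bool} {Γ Δ : Struct} :
      CNLDer true a (Δ.comma Γ) → CNLDer true a (Γ.comma Δ)
  | assoc₁ {e : Bool} {Γ Δ Θ : Struct} :
      CNLDer e true (Γ.comma (Δ.comma Θ)) → CNLDer e true ((Γ.comma Δ).comma Θ)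
  | assoc₂ {e : Bool} {Γ Δ Θ : Struct} :
      CNLDer e true ((Γ.comma Δ).comma Θ) → CNLDer e true (Γ.comma (Δ.comma Θ))

end CNL

namespace CNL

/-- The list of formulas at the leaves of a structure. -/
def flat : Struct → List Form
  | .emp => []
  | .leaf F => [F]
  | .pair Γ Δ => flat Γ ++ flat Δ

theorem flat_comma (Γ Δ : Struct) : flat (Γ.comma Δ) = flat Γ ++ flat Δ := by
  cases Γ <;> cases Δ <;> simp [Struct.comma, flat]

theorem flat_fill (R : Ctx) :
    ∃ l r : List Form, ∀ X : Struct, flat (R.fill X) = l ++ (flat X ++ r) := by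
  induction R with
  | hole => exact ⟨[], [], fun X => by simp [Ctx.fill]⟩
  | pairL R Δ ih =>
    obtain ⟨l, r, h⟩ := ih
    exact ⟨l, r ++ flat Δ, fun X => by simp [Ctx.fill, flat_comma, h]⟩
  | pairR Γ R ih =>
    obtain ⟨l, r, h⟩ := ih
    exact ⟨flat Γ ++ l, r, fun X => by simp [Ctx.fill, flat_comma, h]⟩

theorem mem_flat_fill {R : Ctx} {F : Form} {L : List Form}
    (hL : flat (R.fill (.leaf F)) = L) : F ∈ L := by
  obtain ⟨l, r, h⟩ := flat_fill R
  simp [← hL, h, flat]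

/-- Without exchange, neither of the two relevant leaf lists is derivable. -/
theorem no_der (n m : ℕ) {e a : Bool} {Γ : Struct} (d : CNLDer e a Γ) : e = false →
    flat Γ ≠ [.tensor (.neg m) (.pos n), .par (.neg n) (.pos m)] ∧
    flat Γ ≠ [.tensor (.neg m) (.pos n), .neg n, .pos m] := by
  induction d with
  | initP k => simp [flat]
  | initN k => simp [flat]
  | tensor _ _ _ _ =>
    intro _
    constructor <;> intro h <;> rw [flat_comma] at h <;>
      have h2 := congrArg List.getLast? h <;> simp [flat] at h2
  | par R d ih =>
    intro he
    obtain ⟨-, ih⟩ := ih he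
    constructor
    · intro h
      obtain ⟨l, r, hf⟩ := flat_fill R
      rw [hf] at h ih
      apply ih
      simp only [flat, List.cons_append, List.nil_append] at h ⊢
      rcases l with _ | ⟨x, _ | ⟨y, l⟩⟩
      · simp at h
      · simp at h
        obtain ⟨rfl, ⟨rfl, rfl⟩, rfl⟩ := h
        rfl
      · simp at h
    · intro h
      have := mem_flat_fill h
      simp at this
  | oplus₁ R _ _ =>
    intro _
    constructor <;> intro h <;> have h2 := mem_flat_fill h <;>
      simp at h2
  | oplus₂ R _ _ =>
    intro _
    constructor <;> intro h <;> have h2 := mem_flat_fill h <;>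
      simp at h2
  | with' R _ _ _ _ =>
    intro _
    constructor <;> intro h <;> have h2 := mem_flat_fill h <;>
      simp at h2
  | bot R _ _ =>
    intro _
    constructor <;> intro h <;> have h2 := mem_flat_fill h <;>
      simp at h2
  | one => simp [flat]
  | top R =>
    intro _
    constructor <;> intro h <;> have h2 := mem_flat_fill h <;>
      simp at h2
  | exch _ _ => intro h; cases h
  | assoc₁ _ ih => simpa [flat_comma] using ih
  | assoc₂ _ ih => simpa [flat_comma] using ih

/-- The sequent `⊢ (B⊥⊗A, A⊥⅋B)` — the translation of the acLL sequent
`A→B ⊢ A→B`, where `A`, `B` are atoms — is provable in CNL, and every proof of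
it uses the top-level exchange rule `E` (it is not provable when `E` is
removed). -/
theorem exchange_needed (n m : ℕ) :
    CNLDer true true
      (.pair (.leaf (.tensor (.neg m) (.pos n))) (.leaf (.par (.neg n) (.pos m)))) ∧
    ¬ CNLDer false true
      (.pair (.leaf (.tensor (.neg m) (.pos n))) (.leaf (.par (.neg n) (.pos m)))) := by
  constructor
  · exact CNLDer.exch (Γ := .leaf (.tensor (.neg m) (.pos n)))
      (Δ := .leaf (.par (.neg n) (.pos m)))
      (CNLDer.par (.pairL .hole (.leaf (.tensor (.neg m) (.pos n))))
        (CNLDer.tensor (Γ := .leaf (.neg n)) (Δ := .leaf (.pos m))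
          (CNLDer.initN n) (CNLDer.initP m)))
  · intro d
    exact (no_der n m d rfl).1 rfl

end CNL
end

section
/- The sequent ⊢ (B⊥, A⊥⅋(A⊗B)) (the translation of the acLL sequent B ⊢ A→(A⊗B)) is provable in the classical system CNL, and it is not provable in CNL without the top-level associativity rules A1 and A2. -/
set_option autoImplicit false

namespace CNL

/-- A formula occurs as a leaf of a structure. -/
def Occ (X : Form) : Struct → Prop
  | .emp => False
  | .leaf F => X = F
  | .pair Γ Δ => Occ X Γ ∨ Occ X Δ

theorem occ_comma (X : Form) (Γ Δ : Struct) : Occ X (Γ.comma Δ) ↔ Occ X Γ ∨ Occ X Δ := by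
  cases Γ <;> cases Δ <;> simp [Struct.comma, Occ]

theorem occ_fill (R : Ctx) (X : Form) : Occ X (R.fill (.leaf X)) := by
  induction R with
  | hole => simp [Ctx.fill, Occ]
  | pairL R Δ ih => simp [Ctx.fill, occ_comma, ih]
  | pairR Γ R ih => simp [Ctx.fill, occ_comma, ih]

theorem comma_emp (Γ : Struct) : Γ.comma .emp = Γ := by
  cases Γ <;> simp [Struct.comma]

theorem emp_comma (Γ : Struct) : Struct.comma .emp Γ = Γ := by
  cases Γ <;> simp [Struct.comma]

theorem comma_eq_leaf {Γ Δ : Struct} {a : Form} (h : Γ.comma Δ = .leaf a) :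
    (Γ = .emp ∧ Δ = .leaf a) ∨ (Δ = .emp ∧ Γ = .leaf a) := by
  cases Γ <;> cases Δ <;> simp_all [Struct.comma]

theorem comma_eq_pair {Γ Δ x y : Struct} (h : Γ.comma Δ = .pair x y) :
    (Γ = .emp ∧ Δ = .pair x y) ∨ (Δ = .emp ∧ Γ = .pair x y) ∨ (Γ = x ∧ Δ = y) := by
  cases Γ <;> cases Δ <;> simp_all [Struct.comma]

theorem fill_ne_emp (R : Ctx) (X : Form) : R.fill (.leaf X) ≠ .emp := by
  intro h
  have := occ_fill R X
  rw [h] at this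
  exact this

theorem fill_eq_leaf (R : Ctx) (X a : Form) (h : R.fill (.leaf X) = .leaf a) (Ξ : Struct) :
    X = a ∧ R.fill Ξ = Ξ := by
  induction R with
  | hole => simpa [Ctx.fill] using h
  | pairL R Δ ih =>
    rcases comma_eq_leaf h with ⟨h1, _⟩ | ⟨h1, h2⟩
    · exact absurd h1 (fill_ne_emp R X)
    · subst h1; simpa [Ctx.fill, comma_emp] using ih h2
  | pairR Γ R ih =>
    rcases comma_eq_leaf h with ⟨h1, h2⟩ | ⟨h1, _⟩
    · subst h1; simpa [Ctx.fill, emp_comma] using ih h2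
    · exact absurd h1 (fill_ne_emp R X)

theorem fill_eq_pair (R : Ctx) (X a b : Form)
    (h : R.fill (.leaf X) = .pair (.leaf a) (.leaf b)) (Ξ : Struct) :
    (X = a ∧ R.fill Ξ = Ξ.comma (.leaf b)) ∨ (X = b ∧ R.fill Ξ = Struct.comma (.leaf a) Ξ) := by
  induction R with
  | hole => simp [Ctx.fill] at h
  | pairL R Δ ih =>
    rcases comma_eq_pair h with ⟨h1, _⟩ | ⟨h1, h2⟩ | ⟨h1, h2⟩
    · exact absurd h1 (fill_ne_emp R X)
    · subst h1; simpa [Ctx.fill, comma_emp] using ih h2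
    · obtain ⟨e1, e2⟩ := fill_eq_leaf R X a h1 Ξ
      left; simp [Ctx.fill, e1, e2, h2]
  | pairR Γ R ih =>
    rcases comma_eq_pair h with ⟨h1, h2⟩ | ⟨h1, _⟩ | ⟨h1, h2⟩
    · subst h1; simpa [Ctx.fill, emp_comma] using ih h2
    · exact absurd h1 (fill_ne_emp R X)
    · obtain ⟨e1, e2⟩ := fill_eq_leaf R X b h2 Ξ
      right; simp [Ctx.fill, e1, e2, h1]

/-- The four sequents reachable backwards from the target without associativity. -/
def Bad (b a T : Form) (S : Struct) : Prop :=
  S = .pair (.leaf b) (.leaf (.par a T)) ∨ S = .pair (.leaf (.par a T)) (.leaf b) ∨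
  S = .pair (.leaf b) (.pair (.leaf a) (.leaf T)) ∨
  S = .pair (.pair (.leaf a) (.leaf T)) (.leaf b)

theorem bad_exch {b a T : Form} {Γ Δ : Struct} (h : Bad b a T (Γ.comma Δ)) :
    Bad b a T (Δ.comma Γ) := by
  cases Γ <;> cases Δ <;> simp_all [Struct.comma, Bad] <;> tauto

theorem bad_occ {b a T X : Form} {S : Struct} (h : Bad b a T S) (hX : Occ X S) :
    X = b ∨ X = a ∨ X = T ∨ X = .par a T := by
  rcases h with rfl | rfl | rfl | rfl <;> simp [Occ] at hX <;> tauto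

theorem not_bad (n m : ℕ) {e a : Bool} {S : Struct} (h : CNLDer e a S) (ha : a = false) :
    ¬ Bad (.neg m) (.neg n) (.tensor (.pos n) (.pos m)) S := by
  induction h with
  | initP | initN => simp [Bad]
  | one => simp [Bad]
  | @tensor e a Γ Δ F G _ _ _ _ =>
    generalize Γ.comma Δ = Θ
    cases Θ <;> simp [Bad, Struct.comma]
  | par R h ih =>
    intro hb
    apply ih ha
    have ho := bad_occ hb (occ_fill R _)
    simp at ho
    obtain ⟨rfl, rfl⟩ := ho
    rcases hb with hb | hb | hb | hb
    · rcases fill_eq_pair R _ _ _ hb (.pair (.leaf (.neg n)) (.leaf (.tensor (.pos n) (.pos m))))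
        with ⟨h1, _⟩ | ⟨_, h2⟩
      · simp at h1
      · simp [h2, Bad, Struct.comma]
    · rcases fill_eq_pair R _ _ _ hb (.pair (.leaf (.neg n)) (.leaf (.tensor (.pos n) (.pos m))))
        with ⟨_, h2⟩ | ⟨h1, _⟩
      · simp [h2, Bad, Struct.comma]
      · simp at h1
    · have := occ_fill R (.par (.neg n) (.tensor (.pos n) (.pos m)))
      simp [hb, Occ] at this
    · have := occ_fill R (.par (.neg n) (.tensor (.pos n) (.pos m)))
      simp [hb, Occ] at this
  | oplus₁ R | oplus₂ R | with' R | bot R | top R =>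
    intro hb
    have ho := bad_occ hb (occ_fill R _)
    simp at ho
  | exch _ ih => exact fun hb => ih ha (bad_exch hb)
  | assoc₁ | assoc₂ => simp at ha

/-- The sequent `⊢ (B⊥, A⊥⅋(A⊗B))` — the translation of the acLL sequent
`B ⊢ A→(A⊗B)`, where `A`, `B` are atoms — is provable in CNL, and it is not
provable in CNL without the top-level associativity rules `A1` and `A2`. -/
theorem associativity_needed (n m : ℕ) :
    CNLDer true true
      (.pair (.leaf (.neg m)) (.leaf (.par (.neg n) (.tensor (.pos n) (.pos m))))) ∧
    ¬ CNLDer true false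
      (.pair (.leaf (.neg m)) (.leaf (.par (.neg n) (.tensor (.pos n) (.pos m))))) := by
  constructor
  · refine CNLDer.par (.pairR (.leaf (.neg m)) .hole) ?_
    refine CNLDer.assoc₂ (Γ := .leaf (.neg m)) (Δ := .leaf (.neg n))
      (Θ := .leaf (.tensor (.pos n) (.pos m))) ?_
    exact CNLDer.tensor (Γ := .leaf (.neg m)) (Δ := .leaf (.neg n)) (.initN m) (.initN n)
  · exact fun h => not_bad n m h rfl (Or.inl rfl)

end CNL
end
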